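/- arXiv:2009.10399 — 2 statements merged into one kernel-verified Lean document; each statement's English description precedes it below -/
import Mathlib

section
/- Let L, N be a lightlike frame along the unit-speed spacelike curve γ̂, let ψ : I → ℝ be a smooth nowhere-vanishing function, and set L̄ = ψ L, N̄ = N/ψ with associated invariants ᾱ_L, ᾱ_N, ᾱ_G, σ̄_L = ᾱ_L′ + ᾱ_L ᾱ_G, σ̄_N = ᾱ_N′ − ᾱ_N ᾱ_G. Then σ̄_L = ψ σ_L and σ̄_N = ψ⁻¹ σ_N; in particular the vanishing (and the vanishing of all derivatives up to any given order at a point) of σ_L and σ_N does not depend on the choice of the lightlike frame. -/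
open scoped Topology

noncomputable section

/-- Points/vectors of Lorentz–Minkowski 3-space `ℝ³₁`. -/
abbrev R3 : Type := Fin 3 → ℝ

/-- The Lorentz–Minkowski scalar product `⟨x,y⟩ = -x₀y₀ + x₁y₁ + x₂y₂`. -/
def mink (x y : R3) : ℝ := -(x 0 * y 0) + x 1 * y 1 + x 2 * y 2

/-- `(L, N)` is a lightlike frame along the unit-speed spacelike curve `γ` on `I`:
`γ, L, N` are smooth on `I`, `⟨e,e⟩ = 1` (with `e = γ'`), `⟨e,L⟩ = ⟨e,N⟩ = 0`,
`⟨L,L⟩ = ⟨N,N⟩ = 0` and `⟨L,N⟩ = 1` on `I`. -/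
structure LightlikeFrame (I : Set ℝ) (γ L N : ℝ → R3) : Prop where
  smooth_gamma : ContDiffOn ℝ (⊤ : ℕ∞) γ I
  smooth_L : ContDiffOn ℝ (⊤ : ℕ∞) L I
  smooth_N : ContDiffOn ℝ (⊤ : ℕ∞) N I
  unit_speed : ∀ u ∈ I, mink (deriv γ u) (deriv γ u) = 1
  eL : ∀ u ∈ I, mink (deriv γ u) (L u) = 0
  eN : ∀ u ∈ I, mink (deriv γ u) (N u) = 0
  LL : ∀ u ∈ I, mink (L u) (L u) = 0
  NN : ∀ u ∈ I, mink (N u) (N u) = 0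
  LN : ∀ u ∈ I, mink (L u) (N u) = 1

/-- `α_L = ⟨γ'', L⟩`. -/
def alphaL (γ L : ℝ → R3) (u : ℝ) : ℝ := mink (deriv (deriv γ) u) (L u)

/-- `α_N = ⟨γ'', N⟩`. -/
def alphaN (γ N : ℝ → R3) (u : ℝ) : ℝ := mink (deriv (deriv γ) u) (N u)

/-- `α_G = ⟨L, N'⟩`. -/
def alphaG (L N : ℝ → R3) (u : ℝ) : ℝ := mink (L u) (deriv N u)

/-- `σ_L = α_L' + α_L α_G`. -/
def sigmaL (γ L N : ℝ → R3) (u : ℝ) : ℝ :=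
  deriv (alphaL γ L) u + alphaL γ L u * alphaG L N u

/-- `σ_N = α_N' - α_N α_G`. -/
def sigmaN (γ L N : ℝ → R3) (u : ℝ) : ℝ :=
  deriv (alphaN γ N) u - alphaN γ N u * alphaG L N u

/-!
The rescaling multiplies `α_L` by `ψ` and `α_N` by `ψ⁻¹`, while `α_G` changes like a connection
coefficient, by `-ψ'/ψ`. Hence `σ_L = (d/du + α_G) α_L` and `σ_N = (d/du - α_G) α_N` are covariant
derivatives and rescale by the same factors as `α_L` and `α_N`. By the Leibniz rule, multiplication
by a nonvanishing function preserves the order of vanishing at a point.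
-/

section Calculus

variable {𝕜 : Type*} [NontriviallyNormedField 𝕜]

lemma deriv_mul_add_mul_sub_logDeriv {φ f : 𝕜 → 𝕜} {x : 𝕜} (hφ : DifferentiableAt 𝕜 φ x)
    (hf : DifferentiableAt 𝕜 f x) (hφ0 : φ x ≠ 0) (A : 𝕜) :
    deriv (φ * f) x + φ x * f x * (A - logDeriv φ x) = φ x * (deriv f x + f x * A) := by
  rw [deriv_mul hφ hf, logDeriv_apply]
  field_simp
  ring

lemma logDeriv_inv_eq_neg {φ : 𝕜 → 𝕜} {x : 𝕜} (hφ : DifferentiableAt 𝕜 φ x) :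
    logDeriv φ⁻¹ x = -logDeriv φ x := by
  simpa [Pi.inv_def] using logDeriv_fun_zpow hφ (-1)

variable {F : Type*} [NormedAddCommGroup F] [NormedSpace 𝕜 F]

lemma iteratedDeriv_eq_zero_of_eventuallyEq_smul {φ : 𝕜 → 𝕜} {f g : 𝕜 → F} {x : 𝕜} {k : ℕ}
    (hφ : ContDiffAt 𝕜 k φ x) (hf : ContDiffAt 𝕜 k f x) (hg : g =ᶠ[𝓝 x] φ • f)
    (hf0 : ∀ l ≤ k, iteratedDeriv l f x = 0) : ∀ l ≤ k, iteratedDeriv l g x = 0 := by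
  intro l hl
  have hlk : (l : WithTop ℕ∞) ≤ k := mod_cast hl
  have leibniz := iteratedDerivWithin_smul (Set.mem_univ x) uniqueDiffOn_univ
    (hφ.of_le hlk).contDiffWithinAt (hf.of_le hlk).contDiffWithinAt
  simp only [iteratedDerivWithin_univ] at leibniz
  rw [hg.iteratedDeriv_eq, leibniz]
  refine Finset.sum_eq_zero fun i _ => ?_
  rw [hf0 _ ((Nat.sub_le l i).trans hl), smul_zero, smul_zero]

lemma iteratedDeriv_eq_zero_iff_of_eventuallyEq_smul {φ : 𝕜 → 𝕜} {f g : 𝕜 → F} {x : 𝕜} {k : ℕ}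
    (hφ : ContDiffAt 𝕜 k φ x) (hφ0 : φ x ≠ 0) (hf : ContDiffAt 𝕜 k f x)
    (hg : g =ᶠ[𝓝 x] φ • f) :
    (∀ l ≤ k, iteratedDeriv l f x = 0) ↔ ∀ l ≤ k, iteratedDeriv l g x = 0 := by
  have hf_eq : f =ᶠ[𝓝 x] φ⁻¹ • g := by
    filter_upwards [hg, hφ.continuousAt.eventually_ne hφ0] with y hgy hφy
    simp only [Pi.smul_apply', Pi.inv_apply, hgy, inv_smul_smul₀ hφy]
  exact ⟨iteratedDeriv_eq_zero_of_eventuallyEq_smul hφ hf hg,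
    iteratedDeriv_eq_zero_of_eventuallyEq_smul (hφ.inv hφ0)
      ((hφ.smul hf).congr_of_eventuallyEq hg) hf_eq⟩

end Calculus

lemma mink_smul_left (c : ℝ) (x y : R3) : mink (c • x) y = c * mink x y := by
  simp only [mink, Pi.smul_apply, smul_eq_mul]
  ring

lemma mink_smul_right (c : ℝ) (x y : R3) : mink x (c • y) = c * mink x y := by
  simp only [mink, Pi.smul_apply, smul_eq_mul]
  ring

lemma mink_add_right (x y z : R3) : mink x (y + z) = mink x y + mink x z := by
  simp only [mink, Pi.add_apply]
  ring

lemma contDiffOn_mink {E : Type*} [NormedAddCommGroup E] [NormedSpace ℝ E] {s : Set E}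
    {n : WithTop ℕ∞} {f g : E → R3} (hf : ContDiffOn ℝ n f s) (hg : ContDiffOn ℝ n g s) :
    ContDiffOn ℝ n (fun u => mink (f u) (g u)) s := by
  rw [contDiffOn_pi] at hf hg
  exact (((hf 0).mul (hg 0)).neg.add ((hf 1).mul (hg 1))).add ((hf 2).mul (hg 2))

section Regularity

variable {I : Set ℝ} {n : WithTop ℕ∞} {γ L N : ℝ → R3}

lemma contDiffOn_alphaL (hI : IsOpen I) (hγ : ContDiffOn ℝ (n + 2) γ I)
    (hL : ContDiffOn ℝ n L I) : ContDiffOn ℝ n (alphaL γ L) I := by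
  have hγ' : ContDiffOn ℝ (n + 1) (deriv γ) I :=
    hγ.deriv_of_isOpen hI (by rw [add_assoc, one_add_one_eq_two])
  exact contDiffOn_mink (hγ'.deriv_of_isOpen hI le_rfl) hL

lemma contDiffOn_alphaN (hI : IsOpen I) (hγ : ContDiffOn ℝ (n + 2) γ I)
    (hN : ContDiffOn ℝ n N I) : ContDiffOn ℝ n (alphaN γ N) I :=
  contDiffOn_alphaL hI hγ hN

lemma contDiffOn_alphaG (hI : IsOpen I) (hL : ContDiffOn ℝ n L I)
    (hN : ContDiffOn ℝ (n + 1) N I) : ContDiffOn ℝ n (alphaG L N) I :=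
  contDiffOn_mink hL (hN.deriv_of_isOpen hI le_rfl)

lemma contDiffOn_sigmaL (hI : IsOpen I) (hγ : ContDiffOn ℝ (n + 1 + 2) γ I)
    (hL : ContDiffOn ℝ (n + 1) L I) (hN : ContDiffOn ℝ (n + 1) N I) :
    ContDiffOn ℝ n (sigmaL γ L N) I := by
  have hα := contDiffOn_alphaL hI hγ hL
  have hαG := contDiffOn_alphaG hI (hL.of_le le_self_add) hN
  exact (hα.deriv_of_isOpen hI le_rfl).add ((hα.of_le le_self_add).mul hαG)

lemma contDiffOn_sigmaN (hI : IsOpen I) (hγ : ContDiffOn ℝ (n + 1 + 2) γ I)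
    (hL : ContDiffOn ℝ n L I) (hN : ContDiffOn ℝ (n + 1) N I) :
    ContDiffOn ℝ n (sigmaN γ L N) I := by
  have hα := contDiffOn_alphaN hI hγ hN
  have hαG := contDiffOn_alphaG hI hL hN
  exact (hα.deriv_of_isOpen hI le_rfl).sub ((hα.of_le le_self_add).mul hαG)

end Regularity

section FrameChange

variable {γ L N : ℝ → R3} {ψ : ℝ → ℝ} {u : ℝ}

lemma alphaL_smul (γ L : ℝ → R3) (φ : ℝ → ℝ) :
    alphaL γ (fun u => φ u • L u) = φ * alphaL γ L :=
  funext fun _ => mink_smul_right _ _ _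

lemma alphaN_smul (γ N : ℝ → R3) (φ : ℝ → ℝ) :
    alphaN γ (fun u => φ u • N u) = φ * alphaN γ N :=
  funext fun _ => mink_smul_right _ _ _

lemma alphaG_smul_inv_smul (hN : DifferentiableAt ℝ N u) (hψ : DifferentiableAt ℝ ψ u)
    (hψ0 : ψ u ≠ 0) (hLN : mink (L u) (N u) = 1) :
    alphaG (fun u => ψ u • L u) (fun u => (ψ u)⁻¹ • N u) u = alphaG L N u - logDeriv ψ u := by
  have hN' : deriv (fun u => (ψ u)⁻¹ • N u) u =
      (ψ u)⁻¹ • deriv N u + (-deriv ψ u / ψ u ^ 2) • N u :=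
    ((hψ.hasDerivAt.fun_inv hψ0).fun_smul hN.hasDerivAt).deriv
  simp only [alphaG, hN', mink_smul_left, mink_add_right, mink_smul_right, hLN, logDeriv_apply]
  field_simp
  ring

lemma sigmaL_smul_inv_smul (hα : DifferentiableAt ℝ (alphaL γ L) u)
    (hN : DifferentiableAt ℝ N u) (hψ : DifferentiableAt ℝ ψ u) (hψ0 : ψ u ≠ 0)
    (hLN : mink (L u) (N u) = 1) :
    sigmaL γ (fun u => ψ u • L u) (fun u => (ψ u)⁻¹ • N u) u = ψ u * sigmaL γ L N u := by
  rw [sigmaL, alphaL_smul, alphaG_smul_inv_smul hN hψ hψ0 hLN]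
  exact deriv_mul_add_mul_sub_logDeriv hψ hα hψ0 _

lemma sigmaN_smul_inv_smul (hα : DifferentiableAt ℝ (alphaN γ N) u)
    (hN : DifferentiableAt ℝ N u) (hψ : DifferentiableAt ℝ ψ u) (hψ0 : ψ u ≠ 0)
    (hLN : mink (L u) (N u) = 1) :
    sigmaN γ (fun u => ψ u • L u) (fun u => (ψ u)⁻¹ • N u) u = (ψ u)⁻¹ * sigmaN γ L N u := by
  have hcov := deriv_mul_add_mul_sub_logDeriv (hψ.inv hψ0) hα (inv_ne_zero hψ0) (-alphaG L N u)
  rw [logDeriv_inv_eq_neg hψ] at hcov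
  rw [sigmaN, alphaG_smul_inv_smul hN hψ hψ0 hLN, alphaN_smul γ N fun u => (ψ u)⁻¹, sigmaN]
  simp only [Pi.mul_apply]
  linear_combination hcov

end FrameChange

theorem sigma_frame_change_general {I : Set ℝ} (hI : IsOpen I) {n : WithTop ℕ∞}
    {γ L N : ℝ → R3} (hγ : ContDiffOn ℝ (n + 1 + 2) γ I) (hL : ContDiffOn ℝ (n + 1) L I)
    (hN : ContDiffOn ℝ (n + 1) N I) (hLN : ∀ u ∈ I, mink (L u) (N u) = 1)
    {ψ : ℝ → ℝ} (hψ : ContDiffOn ℝ (n + 1) ψ I) (hψ0 : ∀ u ∈ I, ψ u ≠ 0) :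
    (∀ u ∈ I,
      sigmaL γ (fun u => ψ u • L u) (fun u => (ψ u)⁻¹ • N u) u = ψ u * sigmaL γ L N u ∧
      sigmaN γ (fun u => ψ u • L u) (fun u => (ψ u)⁻¹ • N u) u = (ψ u)⁻¹ * sigmaN γ L N u) ∧
    (∀ u₀ ∈ I, ∀ k : ℕ, k ≤ n →
      ((∀ l ≤ k, deriv^[l] (sigmaL γ L N) u₀ = 0) ↔
        (∀ l ≤ k, deriv^[l] (sigmaL γ (fun u => ψ u • L u) (fun u => (ψ u)⁻¹ • N u)) u₀ = 0)) ∧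
      ((∀ l ≤ k, deriv^[l] (sigmaN γ L N) u₀ = 0) ↔
        (∀ l ≤ k,
          deriv^[l] (sigmaN γ (fun u => ψ u • L u) (fun u => (ψ u)⁻¹ • N u)) u₀ = 0))) := by
  have hdiff {E : Type} [NormedAddCommGroup E] [NormedSpace ℝ E] {f : ℝ → E}
      (hf : ContDiffOn ℝ (n + 1) f I) {u : ℝ} (hu : u ∈ I) : DifferentiableAt ℝ f u :=
    (hf.differentiableOn (by simp)).differentiableAt (hI.mem_nhds hu)
  have hσL : Set.EqOn (sigmaL γ (fun u => ψ u • L u) (fun u => (ψ u)⁻¹ • N u))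
      (ψ • sigmaL γ L N) I := fun u hu => sigmaL_smul_inv_smul
    (hdiff (contDiffOn_alphaL hI hγ hL) hu) (hdiff hN hu) (hdiff hψ hu) (hψ0 u hu) (hLN u hu)
  have hσN : Set.EqOn (sigmaN γ (fun u => ψ u • L u) (fun u => (ψ u)⁻¹ • N u))
      (ψ⁻¹ • sigmaN γ L N) I := fun u hu => sigmaN_smul_inv_smul
    (hdiff (contDiffOn_alphaN hI hγ hN) hu) (hdiff hN hu) (hdiff hψ hu) (hψ0 u hu) (hLN u hu)
  refine ⟨fun u hu => ⟨hσL hu, hσN hu⟩, fun u₀ hu₀ k hk => ?_⟩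
  have hnhds : I ∈ 𝓝 u₀ := hI.mem_nhds hu₀
  have hψk : ContDiffAt ℝ k ψ u₀ := (hψ.contDiffAt hnhds).of_le (hk.trans le_self_add)
  have hσLk := ((contDiffOn_sigmaL hI hγ hL hN).contDiffAt hnhds).of_le hk
  have hσNk :=
    ((contDiffOn_sigmaN hI hγ (hL.of_le le_self_add) hN).contDiffAt hnhds).of_le hk
  simp only [← iteratedDeriv_eq_iterate]
  exact ⟨iteratedDeriv_eq_zero_iff_of_eventuallyEq_smul hψk (hψ0 u₀ hu₀) hσLk
      (hσL.eventuallyEq_of_mem hnhds),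
    iteratedDeriv_eq_zero_iff_of_eventuallyEq_smul (hψk.inv (hψ0 u₀ hu₀))
      (inv_ne_zero (hψ0 u₀ hu₀)) hσNk (hσN.eventuallyEq_of_mem hnhds)⟩

/-- With `L̄ = ψ L`, `N̄ = N/ψ`, the quantities `σ̄_L = ψ σ_L`
and `σ̄_N = ψ⁻¹ σ_N` on `I`; in particular the vanishing of `σ_L`, `σ_N` (together
with all derivatives up to any given order) at a point of `I` does not depend on
the choice of the lightlike frame. -/
theorem sigma_frame_change (a b : ℝ) (γ L N : ℝ → R3)
    (hframe : LightlikeFrame (Set.Ioo a b) γ L N)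
    (ψ : ℝ → ℝ) (hψ : ContDiffOn ℝ (⊤ : ℕ∞) ψ (Set.Ioo a b))
    (hψ0 : ∀ u ∈ Set.Ioo a b, ψ u ≠ 0) :
    (∀ u ∈ Set.Ioo a b,
      sigmaL γ (fun u => ψ u • L u) (fun u => (ψ u)⁻¹ • N u) u = ψ u * sigmaL γ L N u ∧
      sigmaN γ (fun u => ψ u • L u) (fun u => (ψ u)⁻¹ • N u) u = (ψ u)⁻¹ * sigmaN γ L N u) ∧
    (∀ u₀ ∈ Set.Ioo a b, ∀ k : ℕ,
      ((∀ l ≤ k, deriv^[l] (sigmaL γ L N) u₀ = 0) ↔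
        (∀ l ≤ k, deriv^[l] (sigmaL γ (fun u => ψ u • L u) (fun u => (ψ u)⁻¹ • N u)) u₀ = 0)) ∧
      ((∀ l ≤ k, deriv^[l] (sigmaN γ L N) u₀ = 0) ↔
        (∀ l ≤ k, deriv^[l] (sigmaN γ (fun u => ψ u • L u) (fun u => (ψ u)⁻¹ • N u)) u₀ = 0))) := by
  have h := sigma_frame_change_general (n := (⊤ : ℕ∞)) isOpen_Ioo hframe.smooth_gamma
    hframe.smooth_L hframe.smooth_N hframe.LN hψ hψ0
  exact ⟨h.1, fun u₀ hu₀ k => h.2 u₀ hu₀ k (mod_cast le_top)⟩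
end
end

section
/- Let L, N be a lightlike frame along the unit-speed spacelike curve γ̂, and define the osculating lightlike surface f_L(u,v) = γ̂(u) + v L(u) and the transversal lightlike surface f_N(u,v) = γ̂(u) + v N(u) on I × ℝ. Then a point (u,v) is a singular point of f_L (i.e. the differential d(f_L)_{(u,v)} has rank < 2) if and only if 1 − v α_L(u) = 0, and (u,v) is a singular point of f_N if and only if 1 − v α_N(u) = 0. -/
open scoped Topology

noncomputable section

/-!
Let `l` be a nonzero null vector and `e` a non-null vector orthogonal to it, for a nondegenerate
symmetric bilinear form on a three-dimensional space. The orthogonal complement of `l` is the plane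
spanned by `e` and `l`, so a vector `x` orthogonal to `l` is a multiple of `l` exactly when `x` is
orthogonal to `e`.

Along the surface `γ(u) + v L(u)` the partial derivatives are `x = γ' + v L'` and `L`.
Differentiating `⟨L, L⟩ = 0` and `⟨L, γ'⟩ = 0` gives `⟨L, x⟩ = 0` and
`⟨x, γ'⟩ = ⟨γ', γ'⟩ - v ⟨γ'', L⟩`, so the vanishing of the latter is the singularity condition.
-/

section LinearAlgebra

variable {K V : Type*} [Field K] [AddCommGroup V] [Module K V]

theorem rank_lt_card_iff_not_linearIndependent_comp_basis {ι W : Type*} [Fintype ι]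
    [AddCommGroup W] [Module K W] (b : Module.Basis ι K W) (f : W →ₗ[K] V) :
    f.rank < Fintype.card ι ↔ ¬ LinearIndependent K (f ∘ b) := by
  have hrange : Submodule.span K (Set.range (f ∘ b)) = f.range := by
    rw [Set.range_comp, Submodule.span_image, b.span_eq, Submodule.map_top]
  have : Module.Finite K W := .of_basis b
  rw [linearIndependent_iff_card_le_finrank_span, Set.finrank, hrange, not_le, LinearMap.rank,
    ← Module.finrank_eq_rank, Nat.cast_lt]

theorem rank_lt_two_iff_exists_smul_eq (f : K × K →ₗ[K] V) (hf : f (0, 1) ≠ 0) :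
    f.rank < 2 ↔ ∃ a : K, a • f (0, 1) = f (1, 0) := by
  have hb : f ∘ Module.Basis.finTwoProd K = ![f (1, 0), f (0, 1)] := by
    ext i
    fin_cases i <;> simp
  have h := rank_lt_card_iff_not_linearIndependent_comp_basis (Module.Basis.finTwoProd K) f
  rw [hb, LinearIndependent.pair_symm_iff, LinearIndependent.pair_iff' hf, Fintype.card_fin,
    Nat.cast_ofNat] at h
  simpa only [ne_eq, not_forall, not_not] using h

theorem ker_eq_span_pair_of_null {B : LinearMap.BilinForm K V} (hV : Module.finrank K V = 3)
    {e l : V} (hee : B e e ≠ 0) (hle : B l e = 0) (hll : B l l = 0) (hl : B l ≠ 0) :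
    (B l).ker = Submodule.span K {l, e} := by
  have : FiniteDimensional K V := .of_finrank_pos (by omega)
  have hl0 : l ≠ 0 := by
    rintro rfl
    exact hl (map_zero B)
  have hind : LinearIndependent K ![l, e] := by
    rw [LinearIndependent.pair_iff' hl0]
    rintro a rfl
    exact hee (by simp [hll])
  have hspan : Module.finrank K (Submodule.span K {l, e}) = 2 := by
    rw [← Matrix.range_cons_cons_empty l e ![], finrank_span_eq_card hind, Fintype.card_fin]
  have hker : Module.finrank K (B l).ker + 1 = 3 :=
    hV ▸ Module.Dual.finrank_ker_add_one_of_ne_zero hl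
  refine (Submodule.eq_of_le_of_finrank_eq ?_ (by omega)).symm
  rw [Submodule.span_le, Set.pair_subset_iff]
  exact ⟨hll, hle⟩

theorem exists_smul_eq_iff_apply_eq_zero_of_null {B : LinearMap.BilinForm K V}
    (hV : Module.finrank K V = 3) {e l x : V} (hee : B e e ≠ 0) (hle : B l e = 0)
    (hll : B l l = 0) (hl : B l ≠ 0) (hlx : B l x = 0) :
    (∃ a : K, a • l = x) ↔ B x e = 0 := by
  constructor
  · rintro ⟨a, rfl⟩
    simp [hle]
  · intro hxe
    have hx : x ∈ Submodule.span K {l, e} :=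
      ker_eq_span_pair_of_null hV hee hle hll hl ▸ LinearMap.mem_ker.2 hlx
    obtain ⟨a, c, rfl⟩ := Submodule.mem_span_pair.1 hx
    have hc : c = 0 := by simpa [hle, hee] using hxe
    exact ⟨a, by simp [hc]⟩

end LinearAlgebra

section Calculus

variable {𝕜 E F G : Type*} [NontriviallyNormedField 𝕜] [NormedAddCommGroup E] [NormedSpace 𝕜 E]
  [NormedAddCommGroup F] [NormedSpace 𝕜 F] [NormedAddCommGroup G] [NormedSpace 𝕜 G]

theorem fderiv_ruled_apply {γ L : 𝕜 → E} {u : 𝕜} (hγ : DifferentiableAt 𝕜 γ u)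
    (hL : DifferentiableAt 𝕜 L u) (v : 𝕜) (p : 𝕜 × 𝕜) :
    fderiv 𝕜 (fun q : 𝕜 × 𝕜 => γ q.1 + q.2 • L q.1) (u, v) p =
      p.1 • (deriv γ u + v • deriv L u) + p.2 • L u := by
  have hfst : HasFDerivAt Prod.fst (ContinuousLinearMap.fst 𝕜 𝕜 𝕜) (u, v) := hasFDerivAt_fst
  have hsnd : HasFDerivAt Prod.snd (ContinuousLinearMap.snd 𝕜 𝕜 𝕜) (u, v) := hasFDerivAt_snd
  have hγ' := hγ.hasDerivAt.hasFDerivAt.comp (u, v) hfst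
  have hL' := hL.hasDerivAt.hasFDerivAt.comp (u, v) hfst
  have h : HasFDerivAt (fun q : 𝕜 × 𝕜 => γ q.1 + q.2 • L q.1) _ (u, v) := hγ'.add (hsnd.smul hL')
  rw [h.fderiv]
  simp only [add_apply, smul_apply, ContinuousLinearMap.comp_apply,
    ContinuousLinearMap.smulRight_apply, ContinuousLinearMap.toSpanSingleton_apply,
    ContinuousLinearMap.coe_fst', ContinuousLinearMap.coe_snd']
  module

theorem bilin_deriv_add_eq_zero_of_eventually_const (B : E →L[𝕜] F →L[𝕜] G) {x : 𝕜 → E}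
    {y : 𝕜 → F} {u : 𝕜} {c : G} (hx : DifferentiableAt 𝕜 x u) (hy : DifferentiableAt 𝕜 y u)
    (hc : ∀ᶠ t in 𝓝 u, B (x t) (y t) = c) :
    B (x u) (deriv y u) + B (deriv x u) (y u) = 0 :=
  (B.hasDerivAt_of_bilinear (fun _ => hx.hasDerivAt) (fun _ => hy.hasDerivAt)).unique
    ((hasDerivAt_const u c).congr_of_eventuallyEq hc)

end Calculus

theorem singular_points_of_lightlike_surfaces_general {V : Type*} [NormedAddCommGroup V]
    [NormedSpace ℝ V] (hV : Module.finrank ℝ V = 3) {B : LinearMap.BilinForm ℝ V} (hB : B.IsSymm)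
    {γ L : ℝ → V} {u : ℝ} (hγ' : DifferentiableAt ℝ (deriv γ) u) (hL : DifferentiableAt ℝ L u)
    (hee : B (deriv γ u) (deriv γ u) ≠ 0) (hLe : ∀ᶠ t in 𝓝 u, B (L t) (deriv γ t) = 0)
    (hLL : ∀ᶠ t in 𝓝 u, B (L t) (L t) = 0) (hLu : B (L u) ≠ 0) (v : ℝ) :
    (fderiv ℝ (fun p : ℝ × ℝ => γ p.1 + p.2 • L p.1) (u, v)).toLinearMap.rank < 2 ↔
      B (deriv γ u) (deriv γ u) - v * B (deriv (deriv γ) u) (L u) = 0 := by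
  have : FiniteDimensional ℝ V := .of_finrank_pos (by omega)
  have hγ : DifferentiableAt ℝ γ u := differentiableAt_of_deriv_ne_zero fun h => by simp [h] at hee
  have hLe' : B (L u) (deriv (deriv γ) u) + B (deriv L u) (deriv γ u) = 0 :=
    bilin_deriv_add_eq_zero_of_eventually_const B.toContinuousBilinearMap hL hγ' hLe
  have hLL' : B (L u) (deriv L u) + B (deriv L u) (L u) = 0 :=
    bilin_deriv_add_eq_zero_of_eventually_const B.toContinuousBilinearMap hL hL hLL
  set x : V := deriv γ u + v • deriv L u with hx
  have hLx : B (L u) x = 0 := by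
    rw [hB.eq (deriv L u)] at hLL'
    simp only [hx, map_add, map_smul, smul_eq_mul, hLe.self_of_nhds]
    linear_combination v / 2 * hLL'
  have hxe : B x (deriv γ u) = B (deriv γ u) (deriv γ u) - v * B (deriv (deriv γ) u) (L u) := by
    rw [hB.eq (deriv (deriv γ) u)]
    simp only [hx, map_add, map_smul, smul_eq_mul, LinearMap.add_apply, LinearMap.smul_apply]
    linear_combination v * hLe'
  have hdu : fderiv ℝ (fun p : ℝ × ℝ => γ p.1 + p.2 • L p.1) (u, v) (1, 0) = x := by
    simp [fderiv_ruled_apply hγ hL, hx]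
  have hdv : fderiv ℝ (fun p : ℝ × ℝ => γ p.1 + p.2 • L p.1) (u, v) (0, 1) = L u := by
    simp [fderiv_ruled_apply hγ hL]
  have hLu0 : L u ≠ 0 := fun h => hLu (by rw [h, map_zero])
  rw [rank_lt_two_iff_exists_smul_eq _ (by simpa [hdv] using hLu0), ← hxe,
    ← exists_smul_eq_iff_apply_eq_zero_of_null hV hee hLe.self_of_nhds hLL.self_of_nhds hLu hLx]
  simp only [ContinuousLinearMap.coe_coe, hdu, hdv]

/-- The Lorentz–Minkowski scalar product `mink` bundled as a bilinear form. -/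
def minkForm : LinearMap.BilinForm ℝ R3 :=
  LinearMap.mk₂ ℝ mink
    (fun x y z => by simp only [mink, Pi.add_apply]; ring)
    (fun c x y => by simp only [mink, Pi.smul_apply, smul_eq_mul]; ring)
    (fun x y z => by simp only [mink, Pi.add_apply]; ring)
    (fun c x y => by simp only [mink, Pi.smul_apply, smul_eq_mul]; ring)

theorem mink_comm (x y : R3) : mink x y = mink y x := by
  simp only [mink]
  ring

theorem minkForm_isSymm : minkForm.IsSymm := ⟨mink_comm⟩

namespace LightlikeFrame

variable {I : Set ℝ} {γ L N : ℝ → R3}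

theorem swap (h : LightlikeFrame I γ L N) : LightlikeFrame I γ N L where
  smooth_gamma := h.smooth_gamma
  smooth_L := h.smooth_N
  smooth_N := h.smooth_L
  unit_speed := h.unit_speed
  eL := h.eN
  eN := h.eL
  LL := h.NN
  NN := h.LL
  LN u hu := (mink_comm _ _).trans (h.LN u hu)

theorem minkForm_ne_zero (h : LightlikeFrame I γ L N) {u : ℝ} (hu : u ∈ I) :
    minkForm (L u) ≠ 0 := fun h0 => by
  have hLN : minkForm (L u) (N u) = 1 := h.LN u hu
  simp [h0] at hLN

theorem rank_fderiv_lt_two_iff (h : LightlikeFrame I γ L N) (hI : IsOpen I) {u : ℝ} (hu : u ∈ I)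
    (v : ℝ) :
    (fderiv ℝ (fun p : ℝ × ℝ => γ p.1 + p.2 • L p.1) (u, v)).toLinearMap.rank < 2 ↔
      1 - v * alphaL γ L u = 0 := by
  have hmem : I ∈ 𝓝 u := hI.mem_nhds hu
  have hγ' : DifferentiableAt ℝ (deriv γ) u :=
    ((h.smooth_gamma.deriv_of_isOpen (m := 1) hI (by norm_cast)).contDiffAt
      hmem).differentiableAt one_ne_zero
  have hL : DifferentiableAt ℝ L u := (h.smooth_L.contDiffAt hmem).differentiableAt (by simp)
  have hLe : ∀ t ∈ I, minkForm (L t) (deriv γ t) = 0 := fun t ht =>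
    (mink_comm _ _).trans (h.eL t ht)
  have hee : minkForm (deriv γ u) (deriv γ u) = 1 := h.unit_speed u hu
  have hsing := singular_points_of_lightlike_surfaces_general (by simp) minkForm_isSymm hγ' hL
    (by simp [hee]) (Filter.eventually_of_mem hmem hLe) (Filter.eventually_of_mem hmem h.LL)
    (h.minkForm_ne_zero hu) v
  rwa [hee] at hsing

end LightlikeFrame

/-- `(u,v)` is a singular point of the osculating lightlike surface
`f_L(u,v) = γ̂(u) + v L(u)` (i.e. the differential has rank `< 2`) iff `1 - v α_L(u) = 0`,
and similarly for the transversal lightlike surface `f_N(u,v) = γ̂(u) + v N(u)`. -/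
theorem singular_points_of_lightlike_surfaces (a b : ℝ) (γ L N : ℝ → R3)
    (hframe : LightlikeFrame (Set.Ioo a b) γ L N) :
    ∀ u ∈ Set.Ioo a b, ∀ v : ℝ,
      (((fderiv ℝ (fun p : ℝ × ℝ => γ p.1 + p.2 • L p.1) (u, v)).toLinearMap).rank < 2 ↔
        1 - v * alphaL γ L u = 0) ∧
      (((fderiv ℝ (fun p : ℝ × ℝ => γ p.1 + p.2 • N p.1) (u, v)).toLinearMap).rank < 2 ↔
        1 - v * alphaN γ N u = 0) := by
  exact fun u hu v => ⟨hframe.rank_fderiv_lt_two_iff isOpen_Ioo hu v,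
    hframe.swap.rank_fderiv_lt_two_iff isOpen_Ioo hu v⟩
end
end
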